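/- Let a countable amenable group G act by homeomorphisms on a zero-dimensional compact metric space X and let A, B ⊆ X be disjoint clopen sets. Then inf_{μ∈M_G(X)} μ(B) = D(B) = inf_{x∈X} D(B_x), sup_{μ∈M_G(X)} μ(B) = D̄(B) = sup_{x∈X} D̄(B_x), and inf_{μ∈M_G(X)} (μ(B) − μ(A)) = D(B,A) = inf_{x∈X} D(B_x,A_x); here D(B), D̄(B), D(B,A) are the uniform Banach densities of the clopen sets, and D(B_x), D̄(B_x), D(B_x,A_x) are the Banach densities of the subsets B_x, A_x of G. -/

import Mathlib

/-!
STATEMENT 7 (Proposition `prop` (1) of the paper):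
For an action of a countable amenable group `G` on a zero-dimensional compact metric
space `X` and disjoint clopen `A, B ⊆ X`:
`inf_μ μ(B) = D(B) = inf_x D(B_x)`,
`sup_μ μ(B) = D̄(B) = sup_x D̄(B_x)`,
`inf_μ (μ(B) − μ(A)) = D(B,A) = inf_x D(B_x,A_x)`,
where `μ` ranges over `G`-invariant Borel probability measures, the middle terms are
the uniform Banach densities (defined via `limsup`/`liminf` over a Følner sequence of
`inf_x`/`sup_x` of the finitary densities), and the right-hand terms are the pointwise
Banach densities of the return-time sets `A_x, B_x ⊆ G`.
-/

open Filter Topology Pointwise MeasureTheory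

noncomputable def cnt {G : Type*} [Group G] (F : Finset G) (B : Set G) (g : G) : ℝ :=
  ((B ∩ ((F : Set G) * {g})).ncard : ℝ) / F.card

noncomputable def lowD {G : Type*} [Group G] (F : Finset G) (B : Set G) : ℝ :=
  ⨅ g : G, cnt F B g

noncomputable def uppD {G : Type*} [Group G] (F : Finset G) (B : Set G) : ℝ :=
  ⨆ g : G, cnt F B g

noncomputable def advD {G : Type*} [Group G] (F : Finset G) (B A : Set G) : ℝ :=
  ⨅ g : G, (cnt F B g - cnt F A g)

def IsFolner {G : Type*} [Group G] (F : ℕ → Finset G) : Prop :=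
  (∀ n, (F n).Nonempty) ∧
  ∀ g : G, Tendsto
    (fun n => (((({g} : Set G) * (F n : Set G)) ∩ (F n : Set G)).ncard : ℝ) / (F n).card)
    atTop (𝓝 1)

/-- `A_x = {g ∈ G : g(x) ∈ A}`. -/
def ret (G : Type*) [Group G] {X : Type*} [MulAction G X] (A : Set X) (x : X) : Set G :=
  {g : G | g • x ∈ A}

noncomputable def av {G : Type*} [Group G] {X : Type*} [MulAction G X] (F : Finset G)
    (φ : X → ℝ) (y : X) : ℝ := (∑ f ∈ F, φ (f • y)) / F.card

theorem av_bound {G : Type*} [Group G] {X : Type*} [MulAction G X] (F : Finset G)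
    (hF : F.Nonempty) (φ : X → ℝ) (C : ℝ) (hC : ∀ x, |φ x| ≤ C) (y : X) : |av F φ y| ≤ C := by
  have hc : (0 : ℝ) < F.card := by exact_mod_cast hF.card_pos
  unfold av
  rw [abs_div, abs_of_pos hc, div_le_iff₀ hc]
  calc |∑ f ∈ F, φ (f • y)| ≤ ∑ f ∈ F, |φ (f • y)| := Finset.abs_sum_le_sum_abs _ _
    _ ≤ ∑ f ∈ F, C := Finset.sum_le_sum fun i _ => hC _
    _ = C * F.card := by simp [mul_comm]

theorem av_shift {G : Type*} [Group G] {X : Type*} [MulAction G X] (F : Finset G)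
    (hF : F.Nonempty) (φ : X → ℝ) (C : ℝ) (hC : ∀ x, |φ x| ≤ C) (y : X) (k : G) :
    |av F (fun x => φ (k • x)) y - av F φ y| ≤
      2 * C * (1 - (((({k} : Set G) * (F : Set G)) ∩ (F : Set G)).ncard : ℝ) / F.card) := by
  classical
  have hc : (0 : ℝ) < F.card := by exact_mod_cast hF.card_pos
  set K := F.image (k * ·) with hK
  have hKc : K.card = F.card := Finset.card_image_of_injective _ (mul_right_injective k)
  have e1 : ((({k} : Set G) * (F : Set G)) ∩ (F : Set G)) = ((K ∩ F : Finset G) : Set G) := by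
    ext g; simp [hK]
  rw [e1, Set.ncard_coe_finset]
  have e2 : ∑ f ∈ F, φ (k • f • y) = ∑ g ∈ K, φ (g • y) := by
    rw [hK, Finset.sum_image (fun a _ b _ h => mul_right_injective k h)]
    simp [mul_smul]
  have bd : ∀ S : Finset G, |∑ g ∈ S, φ (g • y)| ≤ C * S.card := fun S => by
    calc |∑ f ∈ S, φ (f • y)| ≤ ∑ f ∈ S, |φ (f • y)| := Finset.abs_sum_le_sum_abs _ _
      _ ≤ ∑ f ∈ S, C := Finset.sum_le_sum fun i _ => hC _
      _ = C * S.card := by simp [mul_comm]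
  have c1 : ((K \ F).card : ℝ) = F.card - (K ∩ F).card := by
    have := Finset.card_sdiff_add_card_inter K F
    rw [hKc] at this
    rw [← this]; push_cast; ring
  have c2 : ((F \ K).card : ℝ) = F.card - (K ∩ F).card := by
    have := Finset.card_sdiff_add_card_inter F K
    rw [Finset.inter_comm] at this
    rw [← this]; push_cast; ring
  unfold av
  rw [← sub_div, e2, ← Finset.sum_sdiff_sub_sum_sdiff, abs_div, abs_of_pos hc, div_le_iff₀ hc]
  have b1 := bd (K \ F)
  have b2 := bd (F \ K)
  rw [c1] at b1
  rw [c2] at b2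
  have : 2 * C * (1 - ((K ∩ F).card : ℝ) / F.card) * F.card = 2 * C * (F.card - (K ∩ F).card) := by
    field_simp
  rw [this]
  rw [abs_le] at b1 b2 ⊢
  constructor <;> linarith

theorem av_low {G : Type*} [Group G] {X : Type*} [MulAction G X]
    (Fs : ℕ → Finset G) (hFs : IsFolner Fs) (φ : X → ℝ) (C : ℝ) (hC : ∀ x, |φ x| ≤ C)
    (x : X) (m : ℕ) (ε : ℝ) (hε : 0 < ε) :
    ∀ᶠ n in atTop, (⨅ h : G, av (Fs m) φ (h • x)) - ε ≤ ⨅ h : G, av (Fs n) φ (h • x) := by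
  have ht : Tendsto (fun n => (∑ k ∈ Fs m, 2 * C * (1 -
      (((({k} : Set G) * (Fs n : Set G)) ∩ (Fs n : Set G)).ncard : ℝ) / (Fs n).card))
        / (Fs m).card) atTop (𝓝 ((∑ k ∈ Fs m, 2 * C * (1 - 1)) / (Fs m).card)) := by
    refine Tendsto.div_const (tendsto_finsetSum _ fun k _ => ?_) _
    exact ((hFs.2 k).const_sub 1).const_mul _
  simp only [sub_self, mul_zero, Finset.sum_const_zero, zero_div] at ht
  filter_upwards [ht.eventually_lt_const hε] with n hn
  refine le_ciInf fun h => ?_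
  have hm : (0 : ℝ) < (Fs m).card := by exact_mod_cast (hFs.1 m).card_pos
  have hnn : (0 : ℝ) < (Fs n).card := by exact_mod_cast (hFs.1 n).card_pos
  set y := h • x
  -- double averaging
  have key : (∑ k ∈ Fs m, av (Fs n) (fun z => φ (k • z)) y) / (Fs m).card
      = (∑ f ∈ Fs n, av (Fs m) φ (f • y)) / (Fs n).card := by
    unfold av
    rw [← Finset.sum_div, ← Finset.sum_div, Finset.sum_comm]
    field_simp
  have bdd : BddBelow (Set.range fun h : G => av (Fs m) φ (h • x)) :=
    ⟨-C, by rintro _ ⟨h, rfl⟩; exact (abs_le.1 (av_bound _ (hFs.1 m) φ C hC _)).1⟩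
  have l1 : (⨅ h : G, av (Fs m) φ (h • x)) ≤ (∑ f ∈ Fs n, av (Fs m) φ (f • y)) / (Fs n).card := by
    rw [le_div_iff₀ hnn]
    calc _ = ∑ f ∈ Fs n, (⨅ h : G, av (Fs m) φ (h • x)) := by simp [mul_comm]
      _ ≤ _ := Finset.sum_le_sum fun f _ => by
        have := ciInf_le bdd (f * h)
        simpa [mul_smul] using this
  have l2 : (∑ k ∈ Fs m, av (Fs n) (fun z => φ (k • z)) y) / (Fs m).card ≤
      av (Fs n) φ y + (∑ k ∈ Fs m, 2 * C * (1 -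
      (((({k} : Set G) * (Fs n : Set G)) ∩ (Fs n : Set G)).ncard : ℝ) / (Fs n).card))
        / (Fs m).card := by
    have : av (Fs n) φ y = (∑ k ∈ Fs m, av (Fs n) φ y) / (Fs m).card := by
      simp; field_simp
    rw [this, ← add_div, ← Finset.sum_add_distrib]
    gcongr with k hk
    have := (abs_le.1 (av_shift (Fs n) (hFs.1 n) φ C hC y k)).2
    linarith
  linarith

theorem exists_meas (G : Type*) [Group G] [Countable G]
    (X : Type*) [TopologicalSpace X] [CompactSpace X] [TopologicalSpace.MetrizableSpace X]
    [MeasurableSpace X] [BorelSpace X] 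
    [MulAction G X] [ContinuousConstSMul G X]
    (Fs : ℕ → Finset G) (hFs : IsFolner Fs) (y : ℕ → X) :
    ∃ μ : Measure X, IsProbabilityMeasure μ ∧ SMulInvariantMeasure G X μ ∧
      ∀ φ : BoundedContinuousFunction X ℝ,
       Tendsto (fun n => av (Fs n) φ (y n)) (hyperfilter ℕ) (𝓝 (∫ x, φ x ∂μ)) := by
  let ν : ℕ → Measure X := fun n => ∑ f ∈ Fs n, ((Fs n).card : ENNReal)⁻¹ • Measure.dirac (f • y n)
  have hν : ∀ n, IsProbabilityMeasure (ν n) := fun n => ⟨by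
    simp only [ν, Measure.coe_finset_sum, Finset.sum_apply, Measure.smul_apply, measure_univ,
      smul_eq_mul, mul_one, Finset.sum_const, nsmul_eq_mul]
    exact ENNReal.mul_inv_cancel (by simpa using (hFs.1 n).ne_empty) (by simp)⟩
  let P : ℕ → ProbabilityMeasure X := fun n => ⟨ν n, hν n⟩
  obtain ⟨μ, -, hμ⟩ := isCompact_univ.ultrafilter_le_nhds ((hyperfilter ℕ).map P) (by simp)
  have hμ' : Tendsto P (hyperfilter ℕ) (𝓝 μ) := hμ
  rw [ProbabilityMeasure.tendsto_iff_forall_integral_tendsto] at hμ'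
  have hint : ∀ n (φ : BoundedContinuousFunction X ℝ),
      ∫ x, φ x ∂(P n : Measure X) = av (Fs n) φ (y n) := by
    intro n φ
    change ∫ x, φ x ∂(ν n) = _
    simp only [ν, av]
    rw [integral_finset_sum_measure]
    · simp only [integral_smul_measure, integral_dirac, smul_eq_mul]
      rw [← Finset.mul_sum, div_eq_inv_mul]
      simp
    · intro f hf
      refine Integrable.smul_measure ?_ (by simpa using (hFs.1 n).ne_empty)
      exact φ.integrable _
  simp only [hint] at hμ'
  refine ⟨μ, inferInstance, ⟨fun g s hs => ?_⟩, hμ'⟩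
  have hg : Measurable (fun x : X => g • x) := measurable_const_smul g
  rw [← Measure.map_apply hg hs]
  congr 1
  haveI : IsProbabilityMeasure (Measure.map (fun x : X => g • x) (μ : Measure X)) :=
    Measure.isProbabilityMeasure_map hg.aemeasurable
  refine ext_of_forall_integral_eq_of_IsFiniteMeasure fun φ => ?_
  rw [integral_map hg.aemeasurable φ.continuous.measurable.aestronglyMeasurable]
  let ψ : BoundedContinuousFunction X ℝ := φ.compContinuous ⟨fun x => g • x, continuous_const_smul g⟩
  have h1 := hμ' ψ
  have h2 := hμ' φ
  have h3 : Tendsto (fun n => av (Fs n) ψ (y n) - av (Fs n) φ (y n)) (hyperfilter ℕ) (𝓝 0) := by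
    refine Tendsto.mono_left ?_ (Nat.hyperfilter_le_atTop)
    refine squeeze_zero_norm (fun n => av_shift (Fs n) (hFs.1 n) φ ‖φ‖ (φ.norm_coe_le_norm) (y n) g) ?_
    have := ((hFs.2 g).const_sub 1).const_mul (2 * ‖φ‖)
    simpa using this
  have := tendsto_nhds_unique (h1.sub h2) h3
  have := sub_eq_zero.1 this
  exact this

theorem integral_av (G : Type*) [Group G] 
    (X : Type*) [TopologicalSpace X] [CompactSpace X] 
    [MeasurableSpace X] [BorelSpace X] 
    [MulAction G X] [ContinuousConstSMul G X]
    (F : Finset G) (hF : F.Nonempty) (φ : BoundedContinuousFunction X ℝ) (μ : Measure X)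
    [IsProbabilityMeasure μ] [SMulInvariantMeasure G X μ] :
    ∫ x, av F φ x ∂μ = ∫ x, φ x ∂μ := by
  unfold av
  have hc : (F.card : ℝ) ≠ 0 := by exact_mod_cast hF.card_ne_zero
  rw [integral_div, integral_finset_sum]
  · simp only [integral_smul_eq_self]
    simp; field_simp
  · intro f _
    exact (φ.compContinuous ⟨fun x => f • x, continuous_const_smul f⟩).integrable μ

theorem main_inf (G : Type*) [Group G] [Countable G]
    (X : Type*) [TopologicalSpace X] [CompactSpace X] [TopologicalSpace.MetrizableSpace X]
    [MeasurableSpace X] [BorelSpace X] [Nonempty X]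
    [MulAction G X] [ContinuousConstSMul G X]
    (φ : BoundedContinuousFunction X ℝ)
    (Fs : ℕ → Finset G) (hFs : IsFolner Fs) :
    (⨅ μ : {μ : Measure X // IsProbabilityMeasure μ ∧ SMulInvariantMeasure G X μ},
        ∫ x, φ x ∂μ.1)
      = limsup (fun n => ⨅ x : X, ⨅ h : G, av (Fs n) φ (h • x)) atTop ∧
      limsup (fun n => ⨅ x : X, ⨅ h : G, av (Fs n) φ (h • x)) atTop
      = ⨅ x : X, limsup (fun n => ⨅ h : G, av (Fs n) φ (h • x)) atTop := by
  set C := ‖φ‖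
  have hC : ∀ x, |φ x| ≤ C := φ.norm_coe_le_norm
  have avb := fun n y => abs_le.1 (av_bound (Fs n) (hFs.1 n) φ C hC y)
  let c : ℕ → X → ℝ := fun n x => ⨅ h : G, av (Fs n) φ (h • x)
  have cbd : ∀ n x, BddBelow (Set.range fun h : G => av (Fs n) φ (h • x)) := fun n x =>
    ⟨-C, by rintro _ ⟨h, rfl⟩; exact (avb _ _).1⟩
  have cl : ∀ n x, -C ≤ c n x := fun n x => le_ciInf fun h => (avb _ _).1
  have cav : ∀ n x, c n x ≤ av (Fs n) φ x := fun n x => by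
    simpa using ciInf_le (cbd n x) 1
  have cu : ∀ n x, c n x ≤ C := fun n x => (cav n x).trans (avb _ _).2
  let m : ℕ → ℝ := fun n => ⨅ x : X, c n x
  have mbd : ∀ n, BddBelow (Set.range fun x => c n x) := fun n =>
    ⟨-C, by rintro _ ⟨h, rfl⟩; exact cl _ _⟩
  have ml : ∀ n, -C ≤ m n := fun n => le_ciInf fun h => cl _ _
  have mu : ∀ n, m n ≤ C := fun n => (ciInf_le (mbd n) (Classical.arbitrary X)).trans (cu _ _)
  have bu : ∀ u : ℕ → ℝ, (∀ n, u n ≤ C) → IsBoundedUnder (· ≤ ·) atTop u := fun u h =>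
    isBoundedUnder_of ⟨C, h⟩
  have bl : ∀ u : ℕ → ℝ, (∀ n, -C ≤ u n) → IsBoundedUnder (· ≥ ·) atTop u := fun u h =>
    isBoundedUnder_of ⟨-C, h⟩
  -- convergence
  have clim : ∀ x, Tendsto (fun n => c n x) atTop (𝓝 (limsup (fun n => c n x) atTop)) := by
    intro x
    refine tendsto_of_le_liminf_of_limsup_le ?_ le_rfl (bu _ fun n => cu n x) (bl _ fun n => cl n x)
    refine limsup_le_of_le (bl _ fun n => cl n x).isCoboundedUnder_le (Eventually.of_forall fun k => ?_)
    refine le_of_forall_pos_sub_le fun ε hε => ?_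
    exact le_liminf_of_le (bu _ fun n => cu n x).isCoboundedUnder_ge
      (av_low Fs hFs φ C hC x k ε hε)
  have cmeas : ∀ n, Measurable (c n) := fun n => by
    refine Measurable.iInf fun h => Continuous.measurable ?_
    unfold av
    fun_prop
  have hIbd : BddBelow (Set.range fun μ : {μ : Measure X // IsProbabilityMeasure μ ∧
      SMulInvariantMeasure G X μ} => ∫ x, φ x ∂μ.1) := by
    refine ⟨-C, ?_⟩
    rintro _ ⟨⟨μ, h1, h2⟩, rfl⟩
    have := norm_integral_le_of_norm_le_const (μ := μ) (f := φ) (C := C)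
      (Eventually.of_forall hC)
    simp only [probReal_univ, mul_one] at this
    exact (abs_le.1 this).1
  have M1 : limsup m atTop ≤ ⨅ x, limsup (fun n => c n x) atTop := by
    refine le_ciInf fun x => limsup_le_limsup (Eventually.of_forall fun n => ciInf_le (mbd n) x)
      (bl _ ml).isCoboundedUnder_le (bu _ fun n => cu n x)
  have exm := fun y => exists_meas G X Fs hFs y
  have M2 : (⨅ x, limsup (fun n => c n x) atTop) ≤
      (⨅ μ : {μ : Measure X // IsProbabilityMeasure μ ∧ SMulInvariantMeasure G X μ},
        ∫ x, φ x ∂μ.1) := by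
    haveI : Nonempty {μ : Measure X // IsProbabilityMeasure μ ∧ SMulInvariantMeasure G X μ} := by
      obtain ⟨μ, h1, h2, -⟩ := exm fun _ => Classical.arbitrary X
      exact ⟨⟨μ, h1, h2⟩⟩
    refine le_ciInf ?_
    rintro ⟨μ, h1, h2⟩
    have hcn : ∀ n x, ‖c n x‖ ≤ C := fun n x => abs_le.2 ⟨cl n x, cu n x⟩
    have hlim := tendsto_integral_of_dominated_convergence (μ := μ) (F := c)
      (f := fun x => limsup (fun n => c n x) atTop) (fun _ => C)
      (fun n => (cmeas n).aestronglyMeasurable) (integrable_const _)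
      (fun n => Eventually.of_forall (hcn n)) (Eventually.of_forall clim)
    have up : ∫ x, limsup (fun n => c n x) atTop ∂μ ≤ ∫ x, φ x ∂μ := by
      refine le_of_tendsto hlim (Eventually.of_forall fun n => ?_)
      rw [← integral_av G X (Fs n) (hFs.1 n) φ μ]
      refine integral_mono (Integrable.of_bound (cmeas n).aestronglyMeasurable C
        (Eventually.of_forall (hcn n))) ?_ (cav n)
      refine Integrable.of_bound (Continuous.aestronglyMeasurable ?_) C
        (Eventually.of_forall (av_bound (Fs n) (hFs.1 n) φ C hC))
      unfold av
      fun_prop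
    refine le_trans ?_ up
    have lmeas : Measurable (fun x => limsup (fun n => c n x) atTop) :=
      measurable_of_tendsto_metrizable cmeas (tendsto_pi_nhds.2 clim)
    have lb : ∀ x, |limsup (fun n => c n x) atTop| ≤ C := fun x => abs_le.2
      ⟨ge_of_tendsto' (clim x) fun n => cl n x, le_of_tendsto' (clim x) fun n => cu n x⟩
    calc _ = ∫ x, (⨅ x, limsup (fun n => c n x) atTop) ∂μ := by simp
      _ ≤ _ := by
        refine integral_mono (integrable_const _) (Integrable.of_bound
          lmeas.aestronglyMeasurable C (Eventually.of_forall lb)) fun x => ?_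
        exact ciInf_le ⟨-C, by rintro _ ⟨h, rfl⟩; exact (abs_le.1 (lb _)).1⟩ x
  have M3 : (⨅ μ : {μ : Measure X // IsProbabilityMeasure μ ∧ SMulInvariantMeasure G X μ},
        ∫ x, φ x ∂μ.1) ≤ limsup m atTop := by
    have hy : ∀ n : ℕ, ∃ y, av (Fs n) φ y < m n + 1 / ((n : ℝ) + 1) := fun n => by
      have hp : m n < m n + 1 / ((n : ℝ) + 1) := by
        have : 0 < 1 / ((n : ℝ) + 1) := by positivity
        linarith
      obtain ⟨x, hx⟩ := exists_lt_of_ciInf_lt hp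
      obtain ⟨h, hh⟩ := exists_lt_of_ciInf_lt hx
      exact ⟨_, hh⟩
    choose y hy using hy
    obtain ⟨μ, h1, h2, h3⟩ := exm y
    refine (ciInf_le hIbd ⟨μ, h1, h2⟩).trans ?_
    refine le_of_forall_pos_le_add fun ε hε => ?_
    refine le_of_tendsto (h3 φ) ?_
    refine Eventually.filter_mono Nat.hyperfilter_le_atTop ?_
    have e1 : ∀ᶠ n in atTop, m n < limsup m atTop + ε / 2 :=
      eventually_lt_of_limsup_lt (by linarith) (bu _ mu)
    have e2 : ∀ᶠ n : ℕ in atTop, 1 / ((n : ℝ) + 1) < ε / 2 :=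
      tendsto_one_div_add_atTop_nhds_zero_nat.eventually_lt_const (by linarith)
    filter_upwards [e1, e2] with n a b
    linarith [hy n]
  exact ⟨le_antisymm M3 (M1.trans M2), le_antisymm M1 (M2.trans M3)⟩

theorem cnt_ret {G : Type*} [Group G] {X : Type*} [MulAction G X] (F : Finset G) (B : Set X)
    (x : X) (h : G) : cnt F (ret G B x) h = av F (B.indicator fun _ => (1 : ℝ)) (h • x) := by
  classical
  unfold cnt av
  congr 1
  have : ret G B x ∩ ((F : Set G) * {h}) =
      (((F.filter fun f => f • h • x ∈ B).image (· * h) : Finset G) : Set G) := by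
    ext g
    simp only [ret, Set.mul_singleton, Set.mem_inter_iff, Set.mem_setOf_eq, Set.mem_image,
      Finset.coe_image, Finset.coe_filter, Finset.mem_coe]
    constructor
    · rintro ⟨a, f, hf, rfl⟩
      exact ⟨f, ⟨hf, by simpa [mul_smul] using a⟩, rfl⟩
    · rintro ⟨f, ⟨hf, a⟩, rfl⟩
      exact ⟨by simpa [mul_smul] using a, f, hf, rfl⟩
  rw [this, Set.ncard_coe_finset, Finset.card_image_of_injective _ (mul_left_injective h)]
  simp [Set.indicator_apply, Finset.sum_ite]

theorem real_iInf_neg {ι : Sort*} (f : ι → ℝ) : (⨅ i, -f i) = -⨆ i, f i := by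
  unfold iInf iSup
  rw [← Real.sInf_neg]
  congr 1
  ext z
  simp [Set.mem_neg, neg_eq_iff_eq_neg]

theorem real_limsup_neg (f : ℕ → ℝ) :
    limsup (fun n => -f n) atTop = -liminf f atTop := by
  rw [limsup_eq, liminf_eq, ← Real.sInf_neg]
  congr 1
  ext z
  simp only [Set.mem_neg, Set.mem_setOf_eq]
  refine eventually_congr (Eventually.of_forall fun n => ?_)
  exact ⟨fun h => by linarith, fun h => by linarith⟩

theorem stmt7 (G : Type*) [Group G] [Countable G]
    (X : Type*) [TopologicalSpace X] [CompactSpace X] [TopologicalSpace.MetrizableSpace X]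
    [TotallyDisconnectedSpace X] [MeasurableSpace X] [BorelSpace X] [Nonempty X]
    [MulAction G X] [ContinuousConstSMul G X]
    (A B : Set X) (hA : IsClopen A) (hB : IsClopen B) (hAB : Disjoint A B)
    (Fs : ℕ → Finset G) (hFs : IsFolner Fs) :
    ((⨅ μ : {μ : Measure X // IsProbabilityMeasure μ ∧ SMulInvariantMeasure G X μ},
        (μ.1 B).toReal)
      = limsup (fun n => ⨅ x : X, lowD (Fs n) (ret G B x)) atTop ∧
      limsup (fun n => ⨅ x : X, lowD (Fs n) (ret G B x)) atTop
      = ⨅ x : X, limsup (fun n => lowD (Fs n) (ret G B x)) atTop) ∧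
    ((⨆ μ : {μ : Measure X // IsProbabilityMeasure μ ∧ SMulInvariantMeasure G X μ},
        (μ.1 B).toReal)
      = liminf (fun n => ⨆ x : X, uppD (Fs n) (ret G B x)) atTop ∧
      liminf (fun n => ⨆ x : X, uppD (Fs n) (ret G B x)) atTop
      = ⨆ x : X, liminf (fun n => uppD (Fs n) (ret G B x)) atTop) ∧
    ((⨅ μ : {μ : Measure X // IsProbabilityMeasure μ ∧ SMulInvariantMeasure G X μ},
        ((μ.1 B).toReal - (μ.1 A).toReal))
      = limsup (fun n => ⨅ x : X, advD (Fs n) (ret G B x) (ret G A x)) atTop ∧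
      limsup (fun n => ⨅ x : X, advD (Fs n) (ret G B x) (ret G A x)) atTop
      = ⨅ x : X, limsup (fun n => advD (Fs n) (ret G B x) (ret G A x)) atTop) := by

  let b : BoundedContinuousFunction X ℝ := BoundedContinuousFunction.mkOfCompact
    ⟨B.indicator fun _ => (1 : ℝ), continuous_const.indicator (by simp [hB.frontier_eq])⟩
  let a : BoundedContinuousFunction X ℝ := BoundedContinuousFunction.mkOfCompact
    ⟨A.indicator fun _ => (1 : ℝ), continuous_const.indicator (by simp [hA.frontier_eq])⟩
  have ib : ∀ μ : Measure X, ∫ x, b x ∂μ = (μ B).toReal := fun μ => by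
    change ∫ x, B.indicator (fun _ => (1 : ℝ)) x ∂μ = _
    rw [integral_indicator hB.isOpen.measurableSet]
    simp [Measure.real]
  have ia : ∀ μ : Measure X, ∫ x, a x ∂μ = (μ A).toReal := fun μ => by
    change ∫ x, A.indicator (fun _ => (1 : ℝ)) x ∂μ = _
    rw [integral_indicator hA.isOpen.measurableSet]
    simp [Measure.real]
  have cb : ∀ n x h, cnt (Fs n) (ret G B x) h = av (Fs n) b (h • x) := fun n x h => cnt_ret _ _ _ _
  have ca : ∀ n x h, cnt (Fs n) (ret G A x) h = av (Fs n) a (h • x) := fun n x h => cnt_ret _ _ _ _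
  refine ⟨?_, ?_, ?_⟩
  · have := main_inf G X b Fs hFs
    simp only [ib, ← cb] at this
    exact this
  · have := main_inf G X (-b) Fs hFs
    have e : ∀ n y, av (Fs n) (-b) y = - av (Fs n) b y := fun n y => by
      simp [av, neg_div]
    have e' : ∀ μ : Measure X, ∫ x, (-b) x ∂μ = -(μ B).toReal := fun μ => by
      rw [← ib, ← integral_neg]
      rfl
    simp only [e, e', ← cb,
      real_iInf_neg, real_limsup_neg, neg_inj] at this
    exact this
  · have := main_inf G X (b - a) Fs hFs
    have e : ∀ n y, av (Fs n) (b - a) y = av (Fs n) b y - av (Fs n) a y := fun n y => by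
      simp [av, sub_div]
    have e' : ∀ μ : {μ : Measure X // IsProbabilityMeasure μ ∧ SMulInvariantMeasure G X μ},
        ∫ x, (b - a) x ∂μ.1 = (μ.1 B).toReal - (μ.1 A).toReal := fun μ => by
      haveI := μ.2.1
      rw [← ib, ← ia, ← integral_sub (b.integrable _) (a.integrable _)]
      rfl
    simp only [e, e', ← cb, ← ca] at this
    exact this
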